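/- (Characterization of periodicity of the Jacobi–Perron algorithm.) Let m ≥ 1 and let α^{(1)}_0, ..., α^{(m)}_0 be real numbers on which the Jacobi–Perron algorithm is well defined for all steps (the fractional part α^{(m)}_n − ⌊α^{(m)}_n⌋ is nonzero for every n ≥ 0). Let a^{(i)}_n = ⌊α^{(i)}_n⌋ and let A^{(i)}_n, for i = 1, ..., m+1, be the associated convergent numerator and denominator sequences. Then the following are equivalent: (1) all m sequences of partial quotients (a^{(i)}_n) are eventually periodic (with a common preperiod and period); (2) all m+1 integer sequences (A^{(i)}_n) are linear recurrence sequences. -/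

import Mathlib

/-- The convergent numerator/denominator sequences `A⁽ⁱ⁾` of a multidimensional
continued fraction with partial quotient sequences `a⁽¹⁾, …, a⁽ᵐ⁾`, with the
index shifted by `m`:  `convA m a i n` is `A⁽ⁱ⁺¹⁾_{n - m}` of the paper. -/
def convA (m : ℕ) (a : Fin m → ℕ → ℤ) (i : Fin (m + 1)) : ℕ → ℤ
  | n =>
    if h : n ≤ m then
      if n = m then
        if hi : (i : ℕ) < m then a ⟨i, hi⟩ 0 else 1
      else
        if (i : ℕ) = m then 0 else if n = m - 1 - (i : ℕ) then 1 else 0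
    else
      (∑ j : Fin m, a j (n - m) * convA m a i (n - ((j : ℕ) + 1))) +
        convA m a i (n - (m + 1))
  termination_by n => n
  decreasing_by all_goals omega

/-- An integer sequence is a linear recurrence sequence if it satisfies, for all
sufficiently large `n`, a recurrence `s (n+k) = c₁ • s (n+k-1) + ⋯ + c_k • s n`
with constant complex coefficients. -/
def IsLinearRecurrenceSeq (s : ℕ → ℤ) : Prop :=
  ∃ k : ℕ, 1 ≤ k ∧ ∃ c : Fin k → ℂ, ∃ N : ℕ, ∀ n, N ≤ n →
    (s (n + k) : ℂ) = ∑ t : Fin k, c t * (s (n + k - 1 - (t : ℕ)) : ℂ)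

open Polynomial

/-- The left shift of complex sequences, as an algebra endomorphism. -/
def seqShift : (ℕ → ℂ) →ₐ[ℂ] (ℕ → ℂ) where
  toFun s n := s (n + 1)
  map_one' := rfl
  map_mul' _ _ := rfl
  map_zero' := rfl
  map_add' _ _ := rfl
  commutes' _ := rfl

lemma seqShift_pow_apply (i : ℕ) (s : ℕ → ℂ) (n : ℕ) :
    ((seqShift.toLinearMap ^ i) s) n = s (n + i) := by
  induction i generalizing n with
  | zero => rfl
  | succ i ih =>
    rw [pow_succ', Module.End.mul_apply]
    change ((seqShift.toLinearMap ^ i) s) (n + 1) = _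
    rw [ih]
    congr 1
    omega

lemma aeval_seqShift_apply (p : ℂ[X]) (s : ℕ → ℂ) (n : ℕ) :
    aeval seqShift.toLinearMap p s n =
      ∑ i ∈ Finset.range (p.natDegree + 1), p.coeff i * s (n + i) := by
  rw [aeval_eq_sum_range, LinearMap.sum_apply, Finset.sum_apply]
  simp [seqShift_pow_apply]

/-- An annihilating monic polynomial expresses each term through the preceding ones. -/
lemma eq_neg_sum_of_aeval_seqShift_eq_zero {p : ℂ[X]} (hp : p.Monic) {s : ℕ → ℂ}
    (h : aeval seqShift.toLinearMap p s = 0) (n : ℕ) :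
    s (n + p.natDegree) = -∑ i ∈ Finset.range p.natDegree, p.coeff i * s (n + i) := by
  have h' := congrFun h n
  rw [aeval_seqShift_apply, Finset.sum_range_succ, hp.coeff_natDegree, one_mul] at h'
  exact eq_neg_of_add_eq_zero_right h'

/-- A vector in a finite-dimensional invariant subspace is annihilated by a monic polynomial. -/
lemma exists_monic_aeval_apply_eq_zero {K V : Type*} [Field K] [AddCommGroup V] [Module K V]
    (f : Module.End K V) {W : Submodule K V} [FiniteDimensional K W]
    (hf : ∀ v ∈ W, f v ∈ W) {v : V} (hv : v ∈ W) :
    ∃ p : K[X], p.Monic ∧ aeval f p v = 0 := by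
  refine ⟨(f.restrict hf).charpoly, LinearMap.charpoly_monic _, ?_⟩
  have h := congrArg Subtype.val
    (LinearMap.congr_fun (LinearMap.aeval_self_charpoly (f.restrict hf)) ⟨v, hv⟩)
  rw [aeval_eq_sum_range, LinearMap.sum_apply] at h ⊢
  have hpow : ∀ i, (((f.restrict hf) ^ i) ⟨v, hv⟩ : V) = (f ^ i) v := fun i => by
    rw [Module.End.pow_restrict, LinearMap.restrict_apply]
  simpa [hpow] using h

/-- The algebra of complex sequences contained in a finite-dimensional shift-invariant space. -/
def recurrentSubalgebra : Subalgebra ℂ (ℕ → ℂ) where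
  carrier := {s | ∃ W : Submodule ℂ (ℕ → ℂ), W.FG ∧ W.map seqShift.toLinearMap ≤ W ∧ s ∈ W}
  mul_mem' := by
    rintro s t ⟨V, hV, hV', hs⟩ ⟨W, hW, hW', ht⟩
    refine ⟨V * W, hV.mul hW, ?_, Submodule.mul_mem_mul hs ht⟩
    rw [Submodule.map_mul]
    exact mul_le_mul' hV' hW'
  add_mem' := by
    rintro s t ⟨V, hV, hV', hs⟩ ⟨W, hW, hW', ht⟩
    refine ⟨V ⊔ W, hV.sup hW, ?_, Submodule.add_mem_sup hs ht⟩
    rw [Submodule.map_sup]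
    exact sup_le_sup hV' hW'
  algebraMap_mem' c := by
    refine ⟨1, ?_, ?_, Submodule.algebraMap_mem c⟩
    · rw [Submodule.one_eq_span]
      exact Submodule.fg_span_singleton _
    · rw [Submodule.map_one]

lemma exists_monic_of_mem_recurrentSubalgebra {s : ℕ → ℂ} (hs : s ∈ recurrentSubalgebra) :
    ∃ p : ℂ[X], p.Monic ∧ aeval seqShift.toLinearMap p s = 0 := by
  obtain ⟨W, hW, hW', hs⟩ := hs
  have : FiniteDimensional ℂ W := Module.Finite.iff_fg.2 hW
  exact exists_monic_aeval_apply_eq_zero _ (fun v hv => hW' (Submodule.mem_map_of_mem hv)) hs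

/-- The ring of integer sequences that are recurrent over the complex numbers. -/
def recurrentSubring : Subring (ℕ → ℤ) :=
  recurrentSubalgebra.toSubring.comap ((Int.castRingHom ℂ).compLeft ℕ)

lemma mem_recurrentSubring_of_isLinearRecurrenceSeq {s : ℕ → ℤ} (hs : IsLinearRecurrenceSeq s) :
    s ∈ recurrentSubring := by
  obtain ⟨k, hk, c, N, h⟩ := hs
  set u : ℕ → ℂ := fun n => (s n : ℂ) with hu
  let g : Fin (N + k) → ℕ → ℂ := fun i => (seqShift.toLinearMap ^ (i : ℕ)) u
  have hg : ∀ i, i < N + k →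
      (seqShift.toLinearMap ^ i) u ∈ Submodule.span ℂ (Set.range g) := fun i hi =>
    Submodule.subset_span ⟨⟨i, hi⟩, rfl⟩
  refine ⟨Submodule.span ℂ (Set.range g), Submodule.fg_span (Set.finite_range g), ?_,
    hg 0 (by omega)⟩
  rw [Submodule.map_span_le]
  rintro _ ⟨i, rfl⟩
  have hsucc : seqShift.toLinearMap (g i) = (seqShift.toLinearMap ^ ((i : ℕ) + 1)) u := by
    rw [pow_succ', Module.End.mul_apply]
  rw [hsucc]
  rcases Nat.lt_or_ge ((i : ℕ) + 1) (N + k) with hi | hi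
  · exact hg _ hi
  · have hi' : (i : ℕ) + 1 = N + k := by omega
    have : (seqShift.toLinearMap ^ (N + k)) u =
        ∑ t : Fin k, c t • (seqShift.toLinearMap ^ (N + k - 1 - (t : ℕ))) u := by
      funext n
      rw [seqShift_pow_apply, Finset.sum_apply]
      simp only [Pi.smul_apply, seqShift_pow_apply, smul_eq_mul]
      rw [← add_assoc, hu]
      simp only
      rw [h (n + N) (by omega)]
      refine Finset.sum_congr rfl fun t _ => ?_
      congr 3
      omega
    rw [hi', this]
    exact Submodule.sum_mem _ fun t _ => Submodule.smul_mem _ _ (hg _ (by omega))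

lemma isLinearRecurrenceSeq_of_aeval_eq_zero {s : ℕ → ℤ} {p : ℂ[X]} (hp : p.Monic)
    (h : aeval seqShift.toLinearMap p (fun n => (s n : ℂ)) = 0) : IsLinearRecurrenceSeq s := by
  have hpX : (p * X).Monic := hp.mul monic_X
  have h' : aeval seqShift.toLinearMap (p * X) (fun n => (s n : ℂ)) = 0 := by
    rw [mul_comm, map_mul, Module.End.mul_apply, h, map_zero]
  have hdeg : 1 ≤ (p * X).natDegree := by
    rw [natDegree_mul_X hp.ne_zero]
    omega
  refine ⟨(p * X).natDegree, hdeg, fun t => -(p * X).coeff ((p * X).natDegree - 1 - t), 0,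
    fun n _ => ?_⟩
  rw [eq_neg_sum_of_aeval_seqShift_eq_zero hpX h' n, ← Finset.sum_range_reflect,
    ← Finset.sum_neg_distrib, Finset.sum_range]
  refine Finset.sum_congr rfl fun t _ => ?_
  have : n + (p * X).natDegree - 1 - (t : ℕ) = n + ((p * X).natDegree - 1 - t) := by omega
  rw [this, neg_mul]

/-- A window of a recurrent sequence determines all the later terms. -/
lemma exists_window_determines {s : ℕ → ℤ} (hs : s ∈ recurrentSubring) :
    ∃ d : ℕ, ∀ n₁ n₂ : ℕ, (∀ t < d, s (n₁ + t) = s (n₂ + t)) → ∀ t, s (n₁ + t) = s (n₂ + t) := by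
  obtain ⟨p, hp, h⟩ := exists_monic_of_mem_recurrentSubalgebra hs
  have hrec := eq_neg_sum_of_aeval_seqShift_eq_zero hp h
  refine ⟨p.natDegree, fun n₁ n₂ hw t => ?_⟩
  induction t using Nat.strong_induction_on with
  | _ t ih =>
    rcases Nat.lt_or_ge t p.natDegree with ht | ht
    · exact hw t ht
    · obtain ⟨e, rfl⟩ := Nat.exists_eq_add_of_le' ht
      have h₁ := hrec (n₁ + e)
      have h₂ := hrec (n₂ + e)
      have : ∀ i ∈ Finset.range p.natDegree,
          p.coeff i * ((Int.castRingHom ℂ).compLeft ℕ s) (n₁ + e + i) =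
          p.coeff i * ((Int.castRingHom ℂ).compLeft ℕ s) (n₂ + e + i) := by
        intro i hi
        have := ih (e + i) (by have := Finset.mem_range.1 hi; omega)
        simp only [← add_assoc] at this
        simp [this]
      rw [Finset.sum_congr rfl this, ← h₂] at h₁
      simpa [add_assoc] using h₁

lemma exists_abs_le_geometric {s : ℕ → ℤ} (hs : s ∈ recurrentSubring) :
    ∃ C R : ℝ, 1 ≤ R ∧ ∀ n, |(s n : ℝ)| ≤ C * R ^ n := by
  obtain ⟨p, hp, h⟩ := exists_monic_of_mem_recurrentSubalgebra hs
  have hrec := eq_neg_sum_of_aeval_seqShift_eq_zero hp h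
  set d := p.natDegree
  set R : ℝ := 1 + ∑ i ∈ Finset.range d, ‖p.coeff i‖ with hR
  have hS : 0 ≤ ∑ i ∈ Finset.range d, ‖p.coeff i‖ := Finset.sum_nonneg fun _ _ => norm_nonneg _
  have hR1 : 1 ≤ R := by linarith
  set C : ℝ := ∑ i ∈ Finset.range d, |(s i : ℝ)| with hC
  have hC0 : 0 ≤ C := Finset.sum_nonneg fun _ _ => abs_nonneg _
  refine ⟨C, R, hR1, fun n => ?_⟩
  induction n using Nat.strong_induction_on with
  | _ n ih =>
    rcases Nat.lt_or_ge n d with hn | hn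
    · have : |(s n : ℝ)| ≤ C :=
        Finset.single_le_sum (f := fun i => |(s i : ℝ)|) (fun _ _ => abs_nonneg _)
          (Finset.mem_range.2 hn)
      exact this.trans (le_mul_of_one_le_right hC0 (one_le_pow₀ hR1))
    · obtain ⟨e, rfl⟩ := Nat.exists_eq_add_of_le' hn
      have h₁ : ‖((s (e + d) : ℤ) : ℂ)‖ = ‖∑ i ∈ Finset.range d, p.coeff i * (s (e + i) : ℂ)‖ := by
        rw [← norm_neg (∑ i ∈ Finset.range d, p.coeff i * (s (e + i) : ℂ))]
        exact congrArg norm (hrec e)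
      rcases Nat.eq_zero_or_pos d with hd | hd
      · rw [hd] at h₁
        simp only [Finset.range_zero, Finset.sum_empty, norm_zero, Complex.norm_intCast] at h₁
        rw [hd, h₁]
        positivity
      rw [Complex.norm_intCast] at h₁
      rw [h₁]
      calc ‖∑ i ∈ Finset.range d, p.coeff i * (s (e + i) : ℂ)‖
          ≤ ∑ i ∈ Finset.range d, ‖p.coeff i‖ * (C * R ^ (e + d - 1)) := by
            refine (norm_sum_le _ _).trans (Finset.sum_le_sum fun i hi => ?_)
            have hi := Finset.mem_range.1 hi
            rw [norm_mul, Complex.norm_intCast]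
            gcongr
            exact (ih (e + i) (by omega)).trans (by gcongr; omega)
        _ = (R - 1) * (C * R ^ (e + d - 1)) := by rw [← Finset.sum_mul, hR]; ring
        _ ≤ R * (C * R ^ (e + d - 1)) := by gcongr; linarith
        _ = C * R ^ (e + d) := by
          obtain ⟨f, hf⟩ : ∃ f, e + d = f + 1 := ⟨e + d - 1, by omega⟩
          rw [hf, Nat.add_sub_cancel, pow_succ]; ring

/-- If the partial products of a sequence with terms at least `1` grow at most geometrically,
then there are arbitrarily late windows on which the sequence is uniformly bounded. -/
lemma exists_bounded_windows {x : ℕ → ℝ} (hx : ∀ n, 1 ≤ x n) {C R : ℝ} (hR : 1 ≤ R)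
    (h : ∀ n, ∏ k ∈ Finset.range n, x k ≤ C * R ^ n) (d : ℕ) :
    ∃ K : ℕ, ∀ M, ∃ n, M ≤ n ∧ ∀ t < d, x (n + t) ≤ K := by
  obtain ⟨K, hK⟩ := exists_nat_ge (2 * R ^ d)
  refine ⟨K, ?_⟩
  by_contra! hcon
  obtain ⟨M, hM⟩ := hcon
  have hprod : ∀ s : Finset ℕ, ∀ f : ℕ → ℕ, 1 ≤ ∏ k ∈ s, x (f k) := fun s f => by
    simpa using Finset.prod_le_prod (s := s) (f := fun _ => (1 : ℝ)) (g := fun k => x (f k))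
      (fun _ _ => zero_le_one) (fun _ _ => hx _)
  have hlow : ∀ l : ℕ, (2 * R ^ d) ^ l ≤ ∏ k ∈ Finset.range (M + d * l), x k := by
    intro l
    induction l with
    | zero => simpa using hprod (Finset.range M) id
    | succ l ih =>
      obtain ⟨t, ht, hlt⟩ := hM (M + d * l) (by omega)
      rw [Nat.mul_succ, ← add_assoc, Finset.prod_range_add, pow_succ]
      refine mul_le_mul ih ?_ (by positivity) (zero_le_one.trans (hprod _ id))
      rw [← Finset.mul_prod_erase _ _ (Finset.mem_range.2 ht)]
      exact (hK.trans hlt.le).trans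
        (le_mul_of_one_le_right (zero_le_one.trans (hx _)) (hprod _ fun k => M + d * l + k))
  have hR0 : 0 < R := by linarith
  obtain ⟨l, hl⟩ := pow_unbounded_of_one_lt (C * R ^ M) (one_lt_two : (1 : ℝ) < 2)
  have h₁ := (hlow l).trans (h _)
  rw [mul_pow, pow_add, ← pow_mul, ← mul_assoc] at h₁
  exact hl.not_ge (le_of_mul_le_mul_right h₁ (by positivity))

lemma convA_add_succ (m : ℕ) (a : Fin m → ℕ → ℤ) (i : Fin (m + 1)) (n : ℕ) :
    convA m a i (n + m + 1) =
      (∑ j : Fin m, a j (n + 1) * convA m a i (n + m - j)) + convA m a i n := by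
  rw [convA, dif_neg (by omega)]
  congr 1
  · refine Finset.sum_congr rfl fun j _ => ?_
    congr 2 <;> omega
  · congr 1
    omega

lemma convA_self (m : ℕ) (a : Fin m → ℕ → ℤ) (i : Fin (m + 1)) :
    convA m a i m = if hi : (i : ℕ) < m then a ⟨i, hi⟩ 0 else 1 := by
  rw [convA, dif_pos le_rfl, if_pos rfl]

lemma convA_of_lt (m : ℕ) (a : Fin m → ℕ → ℤ) (i : Fin (m + 1)) {n : ℕ} (hn : n < m) :
    convA m a i n = if (i : ℕ) = m then 0 else if n = m - 1 - (i : ℕ) then 1 else 0 := by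
  rw [convA, dif_pos hn.le, if_neg hn.ne]

/-- The coefficients of the recurrence at step `n`, ordered by increasing index. -/
def stepCoeff {m : ℕ} (a : Fin m → ℕ → ℤ) (n : ℕ) : Fin (m + 1) → ℤ :=
  Fin.cons 1 fun k => a k.rev n

lemma sum_stepCoeff_mul {m : ℕ} (a : Fin m → ℕ → ℤ) (i : Fin (m + 1)) (n : ℕ) :
    ∑ r : Fin (m + 1), stepCoeff a (n + 1) r * convA m a i (n + r) =
      convA m a i (n + m + 1) := by
  rw [convA_add_succ, Fin.sum_univ_succ, add_comm]
  congr 1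
  · rw [← Equiv.sum_comp Fin.revPerm]
    refine Finset.sum_congr rfl fun j _ => ?_
    simp only [stepCoeff, Fin.cons_succ, Fin.revPerm_apply, Fin.rev_rev, Fin.val_succ, Fin.val_rev]
    congr 2
    omega
  · simp [stepCoeff]

/-- The matrix of `m + 1` consecutive vectors of convergents. -/
def convMatrix {m : ℕ} (a : Fin m → ℕ → ℤ) (n : ℕ) : Matrix (Fin (m + 1)) (Fin (m + 1)) ℤ :=
  Matrix.of fun r i => convA m a i (n + r)

/-- Dropping the first row and appending a combination of the rows in which the first one has
coefficient `1` changes the determinant at most by a sign. -/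
lemma det_sq_eq_of_row_shift {m : ℕ} {Q Q' : Matrix (Fin (m + 1)) (Fin (m + 1)) ℤ}
    {c : Fin (m + 1) → ℤ} (hc : c 0 = 1) (hQ : ∀ r : Fin m, Q' r.castSucc = Q r.succ)
    (hlast : Q' (Fin.last m) = ∑ k, c k • Q k) : Q'.det ^ 2 = Q.det ^ 2 := by
  have : Q' = (Q.updateRow 0 (∑ k, c k • Q k)).submatrix (finRotate (m + 1)) id := by
    ext r i
    rw [Matrix.submatrix_apply]
    refine Fin.lastCases ?_ (fun r => ?_) r
    · rw [finRotate_last, Matrix.updateRow_self, hlast, id]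
    · rw [finRotate_apply, Fin.coeSucc_eq_succ, Matrix.updateRow_ne (Fin.succ_ne_zero r), hQ,
        id]
  rw [this, Matrix.det_permute, Matrix.det_updateRow_sum, hc, one_smul, mul_pow]
  rcases Int.units_eq_one_or (Equiv.Perm.sign (finRotate (m + 1))) with h | h <;> simp [h]

lemma convMatrix_det_sq {m : ℕ} (a : Fin m → ℕ → ℤ) (n : ℕ) : (convMatrix a n).det ^ 2 = 1 := by
  induction n with
  | zero =>
    let Q : Matrix (Fin (m + 1)) (Fin (m + 1)) ℤ :=
      (1 : Matrix (Fin (m + 1)) (Fin (m + 1)) ℤ).submatrix Fin.revPerm id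
    have hQ : Q.det ^ 2 = 1 := by
      rw [Matrix.det_permute, Matrix.det_one, mul_one]
      rcases Int.units_eq_one_or (Equiv.Perm.sign (Fin.revPerm : Equiv.Perm (Fin (m + 1))))
        with h | h <;> simp [h]
    rw [← hQ]
    refine det_sq_eq_of_row_shift (c := stepCoeff a 0) rfl (fun r => ?_) ?_
    · ext i
      simp only [convMatrix, Matrix.of_apply, Fin.val_castSucc, zero_add, Q,
        Matrix.submatrix_apply, Fin.revPerm_apply, id, Matrix.one_apply, Fin.ext_iff, Fin.val_rev,
        Fin.val_succ]
      rw [convA_of_lt m a i r.isLt]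
      split_ifs <;> omega
    · ext i
      rw [Finset.sum_apply, ← Equiv.sum_comp Fin.revPerm]
      simp only [convMatrix, Matrix.of_apply, Fin.val_last, zero_add, Q, Pi.smul_apply,
        Matrix.submatrix_apply, Fin.revPerm_apply, Fin.rev_rev, id, Matrix.one_apply, smul_eq_mul,
        mul_ite, mul_one, mul_zero, Finset.sum_ite_eq', Finset.mem_univ, if_true]
      rw [convA_self]
      refine Fin.lastCases ?_ (fun j => ?_) i
      · simp [stepCoeff]
      · simp [stepCoeff, Fin.rev_castSucc]
  | succ n ih =>
    rw [← ih]
    refine det_sq_eq_of_row_shift (c := stepCoeff a (n + 1)) rfl (fun r => ?_) ?_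
    · ext i
      simp only [convMatrix, Matrix.of_apply, Fin.val_castSucc, Fin.val_succ]
      congr 1
      omega
    · ext i
      simp only [convMatrix, Matrix.of_apply, Fin.val_last, Finset.sum_apply, Pi.smul_apply,
        smul_eq_mul]
      rw [sum_stepCoeff_mul]
      congr 1
      omega

lemma det_mem_recurrentSubring {ι : Type*} [Fintype ι] [DecidableEq ι]
    {M : ℕ → Matrix ι ι ℤ} (hM : ∀ r i, (fun n => M n r i) ∈ recurrentSubring) :
    (fun n => (M n).det) ∈ recurrentSubring := by
  have : (fun n => (M n).det) =
      ∑ σ : Equiv.Perm ι, ((Equiv.Perm.sign σ : ℤˣ) : ℤ) • ∏ i, fun n => M n (σ i) i := by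
    funext n
    simp [Matrix.det_apply, Units.smul_def]
  rw [this]
  exact Subring.sum_mem _ fun σ _ => Subring.zsmul_mem _ (Subring.prod_mem _ fun i _ => hM _ _) _

lemma shift_mem_recurrentSubring {s : ℕ → ℤ} (hs : s ∈ recurrentSubring) (r : ℕ) :
    (fun n => s (n + r)) ∈ recurrentSubring := by
  induction r with
  | zero => exact hs
  | succ r ih =>
    obtain ⟨W, hW, hW', h⟩ := ih
    refine ⟨W, hW, hW', ?_⟩
    convert hW' (Submodule.mem_map_of_mem h) using 1
    funext n
    change ((s (n + (r + 1)) : ℤ) : ℂ) = ((s (n + 1 + r) : ℤ) : ℂ)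
    rw [add_right_comm, add_assoc]

/-- By Cramer's rule, the partial quotients are recurrent whenever all convergents are. -/
lemma partialQuotient_mem_recurrentSubring {m : ℕ} {a : Fin m → ℕ → ℤ}
    (h : ∀ i, convA m a i ∈ recurrentSubring) (j : Fin m) :
    (fun n => a j (n + 1)) ∈ recurrentSubring := by
  have hB : ∀ r i, (fun n => convMatrix a n r i) ∈ recurrentSubring := fun r i =>
    shift_mem_recurrentSubring (h i) r
  have hadj : ∀ i r, (fun n => (convMatrix a n).adjugate i r) ∈ recurrentSubring := by
    intro i r
    simp only [Matrix.adjugate_apply]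
    refine det_mem_recurrentSubring fun r' i' => ?_
    by_cases hr : r' = r
    · subst hr
      simp only [Matrix.updateRow_self]
      by_cases hi : i' = i
      · subst hi
        simp only [Pi.single_eq_same]
        exact Subring.one_mem recurrentSubring
      · simp only [Pi.single_eq_of_ne hi]
        exact Subring.zero_mem recurrentSubring
    · simpa only [Matrix.updateRow_ne hr] using hB r' i'
  have key : (fun n => a j (n + 1)) = (fun n => (convMatrix a n).det) *
      ∑ i, (fun n => convA m a i (n + (m + 1))) *
        fun n => (convMatrix a n).adjugate i j.rev.succ := by
    funext n
    have hv : (fun i => convA m a i (n + (m + 1))) =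
        Matrix.vecMul (stepCoeff a (n + 1)) (convMatrix a n) := by
      funext i
      rw [← add_assoc, ← sum_stepCoeff_mul]
      rfl
    have hadj' := congrFun (congrArg (fun v => Matrix.vecMul v (convMatrix a n).adjugate) hv)
      j.rev.succ
    simp only [Matrix.vecMul_vecMul, Matrix.mul_adjugate, Matrix.vecMul_smul, Matrix.vecMul_one,
      Pi.smul_apply, smul_eq_mul] at hadj'
    have hx : stepCoeff a (n + 1) j.rev.succ = a j (n + 1) := by simp [stepCoeff]
    rw [hx] at hadj'
    simp only [Pi.mul_apply, Finset.sum_apply]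
    change _ = _ * Matrix.vecMul (fun i => convA m a i (n + (m + 1)))
      (convMatrix a n).adjugate j.rev.succ
    rw [hadj', ← mul_assoc, ← sq, convMatrix_det_sq, one_mul]
  rw [key]
  exact Subring.mul_mem _ (det_mem_recurrentSubring hB) (Subring.sum_mem _ fun i _ =>
    Subring.mul_mem _ (shift_mem_recurrentSubring (h i) (m + 1)) (hadj _ _))

lemma prod_le_convA_last {m : ℕ} (hm : 0 < m) {a : Fin m → ℕ → ℤ}
    (ha : ∀ j n, 0 ≤ a j (n + 1)) (n : ℕ) :
    ∏ k ∈ Finset.range n, a ⟨0, hm⟩ (k + 1) ≤ convA m a (Fin.last m) (n + m) := by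
  have hnonneg : ∀ n, 0 ≤ convA m a (Fin.last m) n := by
    intro n
    induction n using Nat.strong_induction_on with
    | _ n ih =>
      rcases lt_trichotomy n m with hn | hn | hn
      · simp [convA_of_lt m a _ hn]
      · simp [hn, convA_self]
      · obtain ⟨e, rfl⟩ : ∃ e, n = e + m + 1 := ⟨n - m - 1, by omega⟩
        rw [convA_add_succ]
        exact add_nonneg (Finset.sum_nonneg fun j _ => mul_nonneg (ha j e) (ih _ (by omega)))
          (ih _ (by omega))
  induction n with
  | zero => simp [convA_self]
  | succ n ih =>
    rw [Finset.prod_range_succ, add_right_comm, convA_add_succ, mul_comm]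
    have h₁ := Finset.single_le_sum
      (f := fun j : Fin m => a j (n + 1) * convA m a (Fin.last m) (n + m - j))
      (fun j _ => mul_nonneg (ha j n) (hnonneg _)) (Finset.mem_univ ⟨0, hm⟩)
    have h₂ := mul_le_mul_of_nonneg_left ih (ha ⟨0, hm⟩ n)
    have h₃ := hnonneg n
    simp only [Nat.sub_zero] at h₁
    linarith

/-- If all convergents are recurrent and the first partial quotient is positive and dominates
the others, which are nonnegative, then the partial quotients are eventually periodic. -/
lemma eventually_periodic_of_recurrent {m : ℕ} (hm : 0 < m) {a : Fin m → ℕ → ℤ}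
    (ha : ∀ j n, 0 ≤ a j (n + 1)) (ha0 : ∀ n, 1 ≤ a ⟨0, hm⟩ (n + 1))
    (hle : ∀ j n, a j (n + 1) ≤ a ⟨0, hm⟩ (n + 1))
    (h : ∀ i, convA m a i ∈ recurrentSubring) :
    ∃ N q : ℕ, 1 ≤ q ∧ ∀ j : Fin m, ∀ n, N ≤ n → a j (n + q) = a j n := by
  choose d hd using fun j => exists_window_determines (partialQuotient_mem_recurrentSubring h j)
  set D := Finset.univ.sup d
  have hdD : ∀ j, d j ≤ D := fun j => Finset.le_sup (Finset.mem_univ j)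
  obtain ⟨C, R, hR, hgrow⟩ :=
    exists_abs_le_geometric (shift_mem_recurrentSubring (h (Fin.last m)) m)
  obtain ⟨K, hK⟩ := exists_bounded_windows (x := fun n => (a ⟨0, hm⟩ (n + 1) : ℝ))
    (fun n => by exact_mod_cast ha0 n) hR (C := C) (fun n => by
      refine le_trans ?_ ((le_abs_self _).trans (hgrow n))
      exact_mod_cast prod_le_convA_last hm ha n) D
  let w : ℕ → Fin m → Fin D → ℤ := fun n j t => a j (n + t + 1)
  have hinf : {n | ∀ t < D, a ⟨0, hm⟩ (n + t + 1) ≤ K}.Infinite := by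
    rw [Set.infinite_iff_exists_gt]
    intro M
    obtain ⟨n, hn, hn'⟩ := hK (M + 1)
    exact ⟨n, fun t ht => by exact_mod_cast hn' t ht, hn⟩
  obtain ⟨n₁, -, n₂, -, hlt, heq⟩ := hinf.exists_lt_map_eq_of_mapsTo (f := w)
    (t := Set.Icc 0 fun _ _ => (K : ℤ))
    (fun n hn => ⟨fun j t => ha _ _, fun j t => (hle _ _).trans (hn t t.isLt)⟩)
    (Set.finite_Icc _ _)
  refine ⟨n₁ + 1, n₂ - n₁, by omega, fun j n hn => ?_⟩
  have := hd j n₁ n₂ (fun t ht =>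
    congrFun (congrFun heq j) ⟨t, ht.trans_le (hdD j)⟩) (n - n₁ - 1)
  convert this.symm using 2 <;> omega

/-- Periodic partial quotients give convergents that are linear recurrence sequences. -/
lemma isLinearRecurrenceSeq_convA_of_periodic {m : ℕ} {a : Fin m → ℕ → ℤ} {N q : ℕ} (hq : 1 ≤ q)
    (hper : ∀ j : Fin m, ∀ n, N ≤ n → a j (n + q) = a j n) (i : Fin (m + 1)) :
    IsLinearRecurrenceSeq (convA m a i) := by
  let W : Submodule ℂ (ℕ → ℂ) :=
    { carrier := {u | ∀ n, u (n + m + 1) =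
        (∑ j : Fin m, (a j (n + N + 1) : ℂ) * u (n + m - j)) + u n}
      zero_mem' := by simp
      add_mem' := by
        intro u v hu hv n
        simp only [Pi.add_apply, hu n, hv n, mul_add, Finset.sum_add_distrib]
        ring
      smul_mem' := by
        intro c u hu n
        simp only [Pi.smul_apply, smul_eq_mul, hu n, mul_add, Finset.mul_sum]
        congr 1
        exact Finset.sum_congr rfl fun j _ => by ring }
  have hfin : FiniteDimensional ℂ W := by
    let f : W →ₗ[ℂ] (Fin (m + 1) → ℂ) := (LinearMap.funLeft ℂ ℂ Fin.val).comp W.subtype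
    refine FiniteDimensional.of_injective f ((injective_iff_map_eq_zero f).2 ?_)
    rintro ⟨u, hu⟩ hf
    ext n
    change u n = 0
    induction n using Nat.strong_induction_on with
    | _ n ih =>
      rcases Nat.lt_or_ge n (m + 1) with hn | hn
      · exact congrFun hf ⟨n, hn⟩
      · obtain ⟨e, rfl⟩ : ∃ e, n = e + m + 1 := ⟨n - m - 1, by omega⟩
        rw [hu e, ih e (by omega), add_zero]
        exact Finset.sum_eq_zero fun j _ => by rw [ih _ (by omega), mul_zero]
  have hinv : ∀ u ∈ W, (seqShift.toLinearMap ^ q) u ∈ W := by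
    intro u hu n
    simp only [seqShift_pow_apply]
    have h := hu (n + q)
    rw [show n + m + 1 + q = n + q + m + 1 by omega, h]
    congr 1
    refine Finset.sum_congr rfl fun j _ => ?_
    rw [show n + q + N + 1 = n + N + 1 + q by omega, hper j _ (by omega)]
    congr 2
    omega
  set s : ℕ → ℂ := fun n => (convA m a i n : ℂ) with hs
  have hsW : (seqShift.toLinearMap ^ N) s ∈ W := by
    intro n
    simp only [seqShift_pow_apply, hs]
    rw [show n + m + 1 + N = n + N + m + 1 by omega, convA_add_succ]
    push_cast
    congr 1
    refine Finset.sum_congr rfl fun j _ => ?_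
    congr 3
    omega
  obtain ⟨p, hp, hps⟩ := exists_monic_aeval_apply_eq_zero _ hinv hsW
  refine isLinearRecurrenceSeq_of_aeval_eq_zero ((hp.expand (by omega : 0 < q)).mul
    (monic_X_pow N)) ?_
  rw [map_mul, Module.End.mul_apply, expand_aeval, map_pow, aeval_X]
  exact hps

/-- Characterization of periodicity of the Jacobi–Perron algorithm: if the algorithm
is well defined on `α⁽¹⁾₀, …, α⁽ᵐ⁾₀`, then the sequences of partial quotients
`a⁽ⁱ⁾ₙ = ⌊α⁽ⁱ⁾ₙ⌋` are all eventually periodic (with a common preperiod and period)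
if and only if all the `m + 1` sequences of convergent numerators and denominators
`A⁽¹⁾, …, A⁽ᵐ⁺¹⁾` are linear recurrence sequences. -/
theorem jacobiPerron_periodic_iff_linear_recurrence (m : ℕ) (hm : 1 ≤ m)
    (α : ℕ → Fin m → ℝ)
    (hfrac : ∀ n : ℕ, Int.fract (α n ⟨m - 1, by omega⟩) ≠ 0)
    (hstep1 : ∀ n : ℕ,
      α (n + 1) ⟨0, by omega⟩ = 1 / Int.fract (α n ⟨m - 1, by omega⟩))
    (hstep2 : ∀ n : ℕ, ∀ i : Fin m, 0 < (i : ℕ) →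
      α (n + 1) i =
        Int.fract (α n ⟨(i : ℕ) - 1, (Nat.sub_le _ _).trans_lt i.isLt⟩) /
          Int.fract (α n ⟨m - 1, by omega⟩)) :
    (∃ N q : ℕ, 1 ≤ q ∧ ∀ j : Fin m, ∀ n, N ≤ n → ⌊α (n + q) j⌋ = ⌊α n j⌋) ↔
      (∀ i : Fin (m + 1),
        IsLinearRecurrenceSeq (fun n => convA m (fun j n => ⌊α n j⌋) i n)) := by
  have hpos : ∀ n, 0 < Int.fract (α n ⟨m - 1, by omega⟩) := fun n =>
    (Int.fract_nonneg _).lt_of_ne (hfrac n).symm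
  have h0 : ∀ n, 1 ≤ α (n + 1) ⟨0, by omega⟩ := fun n => by
    rw [hstep1]
    exact (one_le_div (hpos n)).2 (Int.fract_lt_one _).le
  have hbounds : ∀ j n, 0 ≤ α (n + 1) j ∧ α (n + 1) j ≤ α (n + 1) ⟨0, by omega⟩ := by
    intro j n
    rcases Nat.eq_zero_or_pos (j : ℕ) with hj | hj
    · rw [show j = ⟨0, hm⟩ from Fin.ext hj]
      exact ⟨zero_le_one.trans (h0 n), le_rfl⟩
    · rw [hstep1, hstep2 n j hj]
      exact ⟨div_nonneg (Int.fract_nonneg _) (hpos n).le,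
        div_le_div_of_nonneg_right (Int.fract_lt_one _).le (hpos n).le⟩
  constructor
  · rintro ⟨N, q, hq, hper⟩ i
    exact isLinearRecurrenceSeq_convA_of_periodic (a := fun j n => ⌊α n j⌋) hq hper i
  · intro h
    exact eventually_periodic_of_recurrent (a := fun j n => ⌊α n j⌋) hm
      (fun j n => Int.floor_nonneg.2 (hbounds j n).1)
      (fun n => Int.le_floor.2 (by exact_mod_cast h0 n))
      (fun j n => Int.floor_le_floor (hbounds j n).2)
      (fun i => mem_recurrentSubring_of_isLinearRecurrenceSeq (h i))
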